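/- Let p be a prime and R a commutative ring of characteristic p. Let H ∈ R[X] be a polynomial whose second formal derivative vanishes, and for j ∈ ℤ define θ^{(j)} : R[X] → R[X] by θ^{(j)}(f) = H·f′ − j·H′·f. Let b ∈ ℕ with b ≤ p−1 and let j ∈ ℤ with j ≡ b (mod p). Then for every f ∈ R[X], (θ^{(j+b(p−1))} ∘ ⋯ ∘ θ^{(j+(p−1))} ∘ θ^{(j)})(f) = H^{b+1} · f^{(b+1)}, where f^{(b+1)} denotes the (b+1)-st formal derivative of f. In particular the (b+1)-fold iterate is divisible by H^{b+1}. -/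

import Mathlib

open Polynomial

/-- The operator `θ^{(j)} : f ↦ H·f′ − j·H′·f`, with `j : ℤ` acting through `ℤ → R`. -/
noncomputable def thetaDown {R : Type*} [CommRing R] (H : R[X]) (j : ℤ) (f : R[X]) : R[X] :=
  H * derivative f - (j : R) • (derivative H * f)

/-- `thetaDownIter H p n j f` is `(θ^{(j+(n−1)(p−1))} ∘ ⋯ ∘ θ^{(j+(p−1))} ∘ θ^{(j)}) f`. -/
noncomputable def thetaDownIter {R : Type*} [CommRing R] (H : R[X]) (p : ℕ) :
    ℕ → ℤ → R[X] → R[X]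
  | 0, _, f => f
  | n + 1, j, f => thetaDownIter H p n (j + ((p : ℤ) - 1)) (thetaDown H j f)

/-! By the Leibniz rule and `H″ = 0`, the `n`-th derivative of `θ^{(j)} f` is
`H·f^{(n+1)} + (n − j)·H′·f^{(n)}`, and the second term vanishes when `j = n` in `R`.  Apply the
induction hypothesis to `θ^{(j)} f`: the remaining operators start at weight `j + (p − 1)`, which
equals `j − 1` in `R`, so they contribute `H^n` times this `n`-th derivative. -/

section IteratedLeibniz

variable {R : Type*} [Semiring R]

theorem iterate_derivative_mul_of_derivative_eq_zero {c : R[X]} (hc : derivative c = 0)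
    (n : ℕ) (f : R[X]) : derivative^[n] (c * f) = c * derivative^[n] f := by
  induction n with
  | zero => rfl
  | succ n ih =>
    simp only [Function.iterate_succ_apply', ih, derivative_mul, hc, zero_mul, zero_add]

theorem iterate_derivative_mul_derivative {H : R[X]} (hH : derivative (derivative H) = 0)
    (n : ℕ) (f : R[X]) :
    derivative^[n] (H * derivative f) =
      H * derivative^[n + 1] f + n • (derivative H * derivative^[n] f) := by
  induction n with
  | zero => simp
  | succ n ih =>
    rw [Function.iterate_succ_apply', ih]
    simp only [Function.iterate_succ_apply', derivative_add, derivative_smul, derivative_mul, hH,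
      zero_mul, zero_add, succ_nsmul]
    abel

end IteratedLeibniz

section Theta

variable {R : Type*} [CommRing R] {H : R[X]}

theorem iterate_derivative_thetaDown (hH : derivative (derivative H) = 0)
    (j : ℤ) (n : ℕ) (f : R[X]) :
    derivative^[n] (thetaDown H j f) =
      H * derivative^[n + 1] f + ((n : R) - j) • (derivative H * derivative^[n] f) := by
  rw [thetaDown, iterate_derivative_sub, iterate_derivative_smul,
    iterate_derivative_mul_derivative hH, iterate_derivative_mul_of_derivative_eq_zero hH,
    sub_smul, Nat.cast_smul_eq_nsmul, add_sub_assoc]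

theorem iterate_derivative_thetaDown_of_intCast_eq (hH : derivative (derivative H) = 0)
    {j : ℤ} {n : ℕ} (hj : (j : R) = n) (f : R[X]) :
    derivative^[n] (thetaDown H j f) = H * derivative^[n + 1] f := by
  rw [iterate_derivative_thetaDown hH, hj, sub_self, zero_smul, add_zero]

theorem stmt_5_general {p : ℕ} (hp : (p : R) = 0) (hH : derivative (derivative H) = 0)
    {n : ℕ} {j : ℤ} (hj : (j : R) + 1 = n) (f : R[X]) :
    thetaDownIter H p n j f = H ^ n * derivative^[n] f := by
  induction n generalizing j f with
  | zero => simp [thetaDownIter]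
  | succ n ih =>
    have hjn : (j : R) = n := by simpa using hj
    have hnext : ((j + ((p : ℤ) - 1) : ℤ) : R) + 1 = n := by simp [hp, hjn]
    calc thetaDownIter H p (n + 1) j f
        = H ^ n * derivative^[n] (thetaDown H j f) := ih hnext _
      _ = H ^ (n + 1) * derivative^[n + 1] f := by
        rw [iterate_derivative_thetaDown_of_intCast_eq hH hjn, pow_succ, mul_assoc]

end Theta

/-- Let `p` be a prime and `R` a commutative ring of characteristic `p`.  Let `H ∈ R[X]`
have vanishing second formal derivative.  Let `b ≤ p−1` and `j ≡ b (mod p)`.  Then the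
`(b+1)`-fold composite `θ^{(j+b(p−1))} ∘ ⋯ ∘ θ^{(j+(p−1))} ∘ θ^{(j)}` sends `f` to
`H^{b+1}` times the `(b+1)`-st formal derivative of `f`. -/
theorem stmt_5 (p : ℕ) (hp : p.Prime) (R : Type*) [CommRing R] [CharP R p]
    (H : R[X]) (hH : derivative (derivative H) = 0)
    (b : ℕ) (hb : b ≤ p - 1) (j : ℤ) (hj : (p : ℤ) ∣ j - (b : ℤ))
    (f : R[X]) :
    thetaDownIter H p (b + 1) j f = H ^ (b + 1) * derivative^[b + 1] f := by
  have hjb : (j : R) = b := by simpa [sub_eq_zero] using (CharP.intCast_eq_zero_iff R p _).2 hj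
  exact stmt_5_general (CharP.cast_eq_zero R p) hH (by simp [hjb]) f
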